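/- Let n ≥ 1, d ∈ ℝ^n with d > 0 entrywise, and y ∈ ℝ^n; let m ∈ {0,…,n−1} and 0 = Δ_0 < Δ_1 < … < Δ_m < Δ_{m+1} = ∑_i d_i be such that th_{d,y} is affine on each interval [Δ_{k−1}, Δ_k] and changes slope at each Δ_k for 1 ≤ k ≤ m. Then for σ, τ ∈ S_n one has E_{d,y}(σ) = E_{d,y}(τ) if and only if I_k^σ = I_k^τ for all k = 1,…,m+1. -/

import Mathlib

open Finset

noncomputable def th {n : ℕ} (d y : Fin n → ℝ) (c : ℝ) : ℝ :=
  sInf ((fun i => (∑ j, max (y j - y i / d i * d j) 0) + y i / d i * c) ''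
    {i : Fin n | 0 < d i})

noncomputable def psum {n : ℕ} (d : Fin n → ℝ) (σ : Equiv.Perm (Fin n)) (j : ℕ) : ℝ :=
  ∑ i ∈ Finset.univ.filter (fun i : Fin n => (i : ℕ) < j), d (σ i)

noncomputable def Emap {n : ℕ} (d y : Fin n → ℝ) (σ : Equiv.Perm (Fin n)) : Fin n → ℝ :=
  fun k => th d y (psum d σ ((σ.symm k : ℕ) + 1)) - th d y (psum d σ (σ.symm k : ℕ))

def dStoch {n : ℕ} (d : Fin n → ℝ) (A : Matrix (Fin n) (Fin n) ℝ) : Prop :=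
  (∀ i j, 0 ≤ A i j) ∧ (∀ j, ∑ i, A i j = 1) ∧ A.mulVec d = d

def Mset {n : ℕ} (d y : Fin n → ℝ) : Set (Fin n → ℝ) :=
  {x | ∃ A : Matrix (Fin n) (Fin n) ℝ, dStoch d A ∧ A.mulVec y = x}

noncomputable def Aentry {n : ℕ} (d : Fin n → ℝ) (σ τ : Equiv.Perm (Fin n))
    (α : ℕ → Fin n) (j k : Fin n) : ℝ :=
  if k = α j.val ∧ (α j.val).val < (α (j.val + 1)).val then
    (psum d τ ((α j.val).val + 1) - psum d σ j.val) / d (τ (α j.val))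
  else if (α j.val).val < k.val ∧ k.val < (α (j.val + 1)).val then 1
  else if (α j.val).val < (α (j.val + 1)).val ∧ k = α (j.val + 1) then
    (psum d σ (j.val + 1) - psum d τ (α (j.val + 1)).val) / d (τ (α (j.val + 1)))
  else if α j.val = α (j.val + 1) ∧ k = α (j.val + 1) then
    d (σ j) / d (τ (α (j.val + 1)))
  else 0

noncomputable def Amat {n : ℕ} (d : Fin n → ℝ) (σ τ : Equiv.Perm (Fin n))
    (α : ℕ → Fin n) : Matrix (Fin n) (Fin n) ℝ :=
  Matrix.of fun p q => Aentry d σ τ α (σ.symm p) (τ.symm q)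

/-!
Write `A σ j` for the point where the interval of length `d j` belonging to `j` starts when the
intervals are laid end to end in the order `σ`, and `T` for the concave curve. Both sides of the
equivalence say that for every `j`

* either `A σ j = A τ j`,
* or the intervals of `j` under `σ` and `τ` lie in one common affine region of `T`.

This condition clearly implies both sides. Conversely, suppose the interval of `j` under `σ`
contains a breakpoint in its interior. If the increments of `T` agree, strict concavity at the
breakpoint says that the intervals before that of `j` have strictly larger slope and those after
it strictly smaller slope, so `τ` has the same predecessors of `j` as `σ`. If the index sets agree,
the interval of `j` under `τ` contains the same breakpoint, and the predecessors of `j` are again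
the same because an interval ending left of a breakpoint meets only regions left of it.
-/

section ConcaveSlopes

lemma concaveOn_sInf_image {ι E : Type*} [AddCommGroup E] [Module ℝ E] {I : Set ι}
    (hI : I.Nonempty) {S : Set E} {F : E → ι → ℝ}
    (hF : ∀ i ∈ I, ConcaveOn ℝ S fun x => F x i)
    (hbdd : ∀ x ∈ S, BddBelow (F x '' I)) :
    ConcaveOn ℝ S fun x => sInf (F x '' I) := by
  refine ⟨(hF _ hI.some_mem).1, fun x hx z hz a b ha hb hab => le_csInf (hI.image _) ?_⟩
  rintro _ ⟨i, hi, rfl⟩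
  calc a • sInf (F x '' I) + b • sInf (F z '' I)
      ≤ a • F x i + b • F z i := by
        gcongr
        · exact csInf_le (hbdd x hx) ⟨i, hi, rfl⟩
        · exact csInf_le (hbdd z hz) ⟨i, hi, rfl⟩
    _ ≤ F (a • x + b • z) i := (hF i hi).2 hx hz ha hb hab

variable {T : ℝ → ℝ} {S : Set ℝ}

lemma slope_le_slope_of_concaveOn (hT : ConcaveOn ℝ S T) {p q a b : ℝ} (hp : p ∈ S) (hb : b ∈ S)
    (hpq : p < q) (hqa : q ≤ a) (hab : a < b) : slope T a b ≤ slope T p q := by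
  have hmem : Set.Icc p b ⊆ S := hT.1.ordConnected.out hp hb
  calc slope T a b = slope T b a := slope_comm T a b
    _ ≤ slope T b p := hT.slope_anti hb ⟨hp, by grind⟩ ⟨hmem ⟨by linarith, hab.le⟩, by grind⟩
        (by linarith)
    _ = slope T p b := slope_comm T b p
    _ ≤ slope T p q := hT.slope_anti hp ⟨hmem ⟨hpq.le, by linarith⟩, by grind⟩ ⟨hb, by grind⟩
        (by linarith)

/-- `C` is a kink of `T` on `S`: chords of `T` to the right of `C` are strictly less steep than
chords to the left of it. This is how the breakpoints of the curve enter the argument. -/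
def IsKink (T : ℝ → ℝ) (S : Set ℝ) (C : ℝ) : Prop :=
  ∀ ⦃a⦄, a ∈ S → ∀ ⦃b⦄, b ∈ S → a < C → C < b → slope T C b < slope T a C

lemma isKink_of_slope_lt (hT : ConcaveOn ℝ S T) {u C v r r' : ℝ} (hu : u < C) (hv : C < v)
    (hleft : ∀ x ∈ Set.Ico u C, slope T x C = r) (hright : ∀ x ∈ Set.Ioc C v, slope T C x = r')
    (hr : r' < r) : IsKink T S C := by
  intro a ha b hb haC hCb
  have hmem : Set.Icc a b ⊆ S := hT.1.ordConnected.out ha hb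
  have hC : C ∈ S := hmem ⟨haC.le, hCb.le⟩
  have hxC : max a u < C := max_lt haC hu
  have hCz : C < min b v := lt_min hCb hv
  calc slope T C b
      ≤ slope T C (min b v) := hT.slope_anti hC
        ⟨hmem ⟨by linarith, min_le_left _ _⟩, hCz.ne'⟩ ⟨hb, hCb.ne'⟩ (min_le_left _ _)
    _ = r' := hright _ ⟨hCz, min_le_right _ _⟩
    _ < r := hr
    _ = slope T (max a u) C := (hleft _ ⟨le_max_right _ _, hxC⟩).symm
    _ = slope T C (max a u) := slope_comm _ _ _
    _ ≤ slope T C a := hT.slope_anti hC ⟨ha, haC.ne⟩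
        ⟨hmem ⟨le_max_left _ _, by linarith⟩, hxC.ne⟩ (le_max_left _ _)
    _ = slope T a C := slope_comm _ _ _

lemma slope_mem_Ioo_of_slope_lt {a C b : ℝ} (haC : a < C) (hCb : C < b)
    (h : slope T C b < slope T a C) : slope T a b ∈ Set.Ioo (slope T C b) (slope T a C) := by
  rw [slope_def_field, slope_def_field, div_lt_div_iff₀ (by linarith) (by linarith)] at h
  simp only [slope_def_field, Set.mem_Ioo]
  constructor <;> rw [div_lt_div_iff₀ (by linarith) (by linarith)] <;> linarith

lemma slope_lt_slope_of_isKink_right (hT : ConcaveOn ℝ S T) {p q a b C : ℝ} (hC : IsKink T S C)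
    (hp : p ∈ S) (hb : b ∈ S) (hpq : p < q) (hqa : q ≤ a) (haC : a < C) (hCb : C < b) :
    slope T a b < slope T p q := by
  have hmem : Set.Icc p b ⊆ S := hT.1.ordConnected.out hp hb
  have haS : a ∈ S := hmem ⟨by linarith, by linarith⟩
  have hCS : C ∈ S := hmem ⟨by linarith, hCb.le⟩
  exact (slope_mem_Ioo_of_slope_lt haC hCb (hC haS hb haC hCb)).2.trans_le
    (slope_le_slope_of_concaveOn hT hp hCS hpq hqa haC)

lemma slope_lt_slope_of_isKink_left (hT : ConcaveOn ℝ S T) {p q a b C : ℝ} (hC : IsKink T S C)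
    (hp : p ∈ S) (hb : b ∈ S) (hpC : p < C) (hCq : C < q) (hqa : q ≤ a) (hab : a < b) :
    slope T a b < slope T p q := by
  have hmem : Set.Icc p b ⊆ S := hT.1.ordConnected.out hp hb
  have hqS : q ∈ S := hmem ⟨by linarith, by linarith⟩
  have hCS : C ∈ S := hmem ⟨hpC.le, by linarith⟩
  exact (slope_le_slope_of_concaveOn hT hCS hb hCq hqa hab).trans_lt
    (slope_mem_Ioo_of_slope_lt hpC hCq (hC hp hqS hpC hCq)).1

end ConcaveSlopes

section Subdivision

/-- The points `Δ 0 < ⋯ < Δ (m + 1)` subdivide `[0, L]` into the `m + 1` regions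
`[Δ k, Δ (k + 1)]`, `k ≤ m`. -/
structure IsSubdivision (L : ℝ) (m : ℕ) (Δ : ℕ → ℝ) : Prop where
  zero : Δ 0 = 0
  last : Δ (m + 1) = L
  strictMonoOn : StrictMonoOn Δ (Set.Iic (m + 1))

/-- A subdivision of `[0, L]` into the maximal affine regions of `T`, with slope `s k` on
`[Δ k, Δ (k + 1)]`. Regions are numbered from `0`, so region `k` is the paper's region `k + 1`. -/
structure IsAffineSubdivision (T : ℝ → ℝ) (L : ℝ) (m : ℕ) (Δ s : ℕ → ℝ) : Prop
    extends IsSubdivision L m Δ where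
  sub_eq : ∀ k ≤ m, ∀ x ∈ Set.Icc (Δ k) (Δ (k + 1)), ∀ z ∈ Set.Icc (Δ k) (Δ (k + 1)),
    T z - T x = s k * (z - x)
  slope_ne : ∀ k < m, s k ≠ s (k + 1)

variable {T : ℝ → ℝ} {L : ℝ} {m : ℕ} {Δ s : ℕ → ℝ}

lemma IsSubdivision.lt_iff_lt (hΔ : IsSubdivision L m Δ) {k l : ℕ} (hk : k ≤ m + 1)
    (hl : l ≤ m + 1) : Δ k < Δ l ↔ k < l :=
  hΔ.strictMonoOn.lt_iff_lt hk hl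

lemma IsSubdivision.lt_succ (hΔ : IsSubdivision L m Δ) {k : ℕ} (hk : k ≤ m) :
    Δ k < Δ (k + 1) :=
  (hΔ.lt_iff_lt (by lia) (by lia)).2 k.lt_succ_self

lemma IsSubdivision.mem_Icc (hΔ : IsSubdivision L m Δ) {k : ℕ} (hk : k ≤ m + 1) :
    Δ k ∈ Set.Icc 0 L := by
  rw [← hΔ.zero, ← hΔ.last]
  exact ⟨hΔ.strictMonoOn.monotoneOn (Set.mem_Iic.2 (Nat.zero_le _)) hk (Nat.zero_le _),
    hΔ.strictMonoOn.monotoneOn hk (Set.mem_Iic.2 le_rfl) hk⟩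

lemma exists_breakpoint_mem_Ioo_or_exists_region {a b : ℝ} (ha : Δ 0 ≤ a)
    (hb : b ≤ Δ (m + 1)) :
    (∃ k < m, a < Δ (k + 1) ∧ Δ (k + 1) < b) ∨ ∃ k ≤ m, Δ k ≤ a ∧ b ≤ Δ (k + 1) := by
  induction m with
  | zero => exact .inr ⟨0, le_rfl, ha, hb⟩
  | succ m ih =>
    by_cases hbm : b ≤ Δ (m + 1)
    · exact (ih hbm).imp (fun ⟨k, hk, h⟩ => ⟨k, by lia, h⟩) fun ⟨k, hk, h⟩ => ⟨k, by lia, h⟩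
    · by_cases ham : a < Δ (m + 1)
      · exact .inl ⟨m, m.lt_succ_self, ham, not_le.1 hbm⟩
      · exact .inr ⟨m + 1, le_rfl, not_lt.1 ham, hb⟩

lemma isAffineSubdivision_of_eq_affine {b : ℕ → ℝ}
    (hΔ0 : Δ 0 = 0) (hΔlast : Δ (m + 1) = L) (hΔmono : ∀ k ≤ m, Δ k < Δ (k + 1))
    (haff : ∀ k, 1 ≤ k → k ≤ m + 1 → ∀ c ∈ Set.Icc (Δ (k - 1)) (Δ k), T c = s k * c + b k)
    (hslope : ∀ k, 1 ≤ k → k ≤ m → s k ≠ s (k + 1)) :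
    IsAffineSubdivision T L m Δ fun k => s (k + 1) where
  zero := hΔ0
  last := hΔlast
  strictMonoOn := strictMonoOn_Iic_of_lt_succ fun k hk => hΔmono k (Nat.lt_succ_iff.1 hk)
  sub_eq k hk x hx z hz := by
    rw [haff (k + 1) (by lia) (by lia) x hx, haff (k + 1) (by lia) (by lia) z hz]
    ring
  slope_ne k hk := hslope (k + 1) (by lia) hk

lemma IsAffineSubdivision.slope_eq (hΔ : IsAffineSubdivision T L m Δ s) {k : ℕ} (hk : k ≤ m)
    {x z : ℝ} (hx : x ∈ Set.Icc (Δ k) (Δ (k + 1))) (hz : z ∈ Set.Icc (Δ k) (Δ (k + 1)))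
    (hxz : x ≠ z) : slope T x z = s k := by
  rw [slope_def_field, hΔ.sub_eq k hk x hx z hz, mul_div_cancel_right₀ _ (sub_ne_zero.2 hxz.symm)]

lemma IsAffineSubdivision.slope_succ_lt (hΔ : IsAffineSubdivision T L m Δ s)
    (hT : ConcaveOn ℝ (Set.Icc 0 L) T) {k : ℕ} (hk : k < m) : s (k + 1) < s k := by
  have hlt := hΔ.lt_succ hk.le
  have hlt' := hΔ.lt_succ (k := k + 1) hk
  refine lt_of_le_of_ne ?_ (hΔ.slope_ne k hk).symm
  rw [← hΔ.slope_eq hk.le ⟨le_rfl, hlt.le⟩ ⟨hlt.le, le_rfl⟩ hlt.ne,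
    ← hΔ.slope_eq (k := k + 1) hk ⟨le_rfl, hlt'.le⟩ ⟨hlt'.le, le_rfl⟩ hlt'.ne]
  exact slope_le_slope_of_concaveOn hT (hΔ.mem_Icc (by lia)) (hΔ.mem_Icc (by lia)) hlt le_rfl hlt'

lemma IsAffineSubdivision.strictAntiOn_slope (hΔ : IsAffineSubdivision T L m Δ s)
    (hT : ConcaveOn ℝ (Set.Icc 0 L) T) : StrictAntiOn s (Set.Iic m) :=
  strictAntiOn_Iic_of_succ_lt fun _ hk => hΔ.slope_succ_lt hT hk

lemma IsAffineSubdivision.isKink (hΔ : IsAffineSubdivision T L m Δ s)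
    (hT : ConcaveOn ℝ (Set.Icc 0 L) T) {k : ℕ} (hk : k < m) :
    IsKink T (Set.Icc 0 L) (Δ (k + 1)) := by
  have hlt := hΔ.lt_succ hk.le
  have hlt' := hΔ.lt_succ (k := k + 1) hk
  refine isKink_of_slope_lt hT hlt hlt' (fun x hx => ?_) (fun x hx => ?_)
    (hΔ.slope_succ_lt hT hk)
  · exact hΔ.slope_eq hk.le ⟨hx.1, hx.2.le⟩ ⟨hlt.le, le_rfl⟩ hx.2.ne
  · exact hΔ.slope_eq (k := k + 1) hk ⟨le_rfl, hlt'.le⟩ ⟨hx.1.le, hx.2⟩ hx.1.ne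

end Subdivision

section StartPoint

variable {ι α β : Type*} [Fintype ι] [LinearOrder α] [LinearOrder β] {d : ι → ℝ} {f : ι → α}
  {g : ι → β}

/-- The left end of the interval of length `d j` belonging to `j` when such intervals are laid end
to end from `0` in the order of the labels `f`. A permutation `σ` gives the labels `σ⁻¹`. -/
noncomputable def startPoint (d : ι → ℝ) (f : ι → α) (j : ι) : ℝ :=
  ∑ i with f i < f j, d i

lemma startPoint_nonneg (hd : ∀ i, 0 ≤ d i) (f : ι → α) (j : ι) : 0 ≤ startPoint d f j :=
  Finset.sum_nonneg fun i _ => hd i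

lemma startPoint_add_eq_sum_insert [DecidableEq ι] (d : ι → ℝ) (f : ι → α) (j : ι) :
    startPoint d f j + d j = ∑ i ∈ insert j (Finset.univ.filter fun i => f i < f j), d i := by
  rw [startPoint, Finset.sum_insert (by simp), add_comm]

lemma startPoint_add_le_sum (hd : ∀ i, 0 ≤ d i) (f : ι → α) (j : ι) :
    startPoint d f j + d j ≤ ∑ i, d i := by
  classical
  rw [startPoint_add_eq_sum_insert]
  exact Finset.sum_le_univ_sum_of_nonneg hd

lemma startPoint_add_le_startPoint (hd : ∀ i, 0 ≤ d i) {i j : ι} (h : f i < f j) :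
    startPoint d f i + d i ≤ startPoint d f j := by
  classical
  rw [startPoint_add_eq_sum_insert]
  refine Finset.sum_le_sum_of_subset_of_nonneg (fun l hl => ?_) fun l _ _ => hd l
  rcases Finset.mem_insert.1 hl with rfl | hl
  · simpa using h
  · simpa using (Finset.mem_filter.1 hl).2.trans h

lemma startPoint_eq_startPoint_of_not_inverted (d : ι → ℝ) (hf : f.Injective)
    (hg : g.Injective) {j : ι} (hfg : ∀ i, f i < f j → g i ≤ g j)
    (hgf : ∀ i, g i < g j → f i ≤ f j) :
    startPoint d f j = startPoint d g j := by
  have hiff : ∀ i, f i < f j ↔ g i < g j := fun i =>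
    ⟨fun h => (hfg i h).lt_of_ne (hg.ne (ne_of_apply_ne f h.ne)),
      fun h => (hgf i h).lt_of_ne (hf.ne (ne_of_apply_ne g h.ne))⟩
  simp only [startPoint, hiff]

end StartPoint

section Regions

variable {ι α β : Type*} [Fintype ι] [LinearOrder α] [LinearOrder β] {d : ι → ℝ} {f : ι → α}
  {g : ι → β} {m : ℕ} {Δ : ℕ → ℝ}

/-- The paper's index set `I_{k+1}`: the indices whose interval meets the interior of the region
`[Δ k, Δ (k + 1)]`. -/
def regionIndices (d : ι → ℝ) (f : ι → α) (Δ : ℕ → ℝ) (k : ℕ) : Set ι :=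
  {j | (Set.Icc (startPoint d f j) (startPoint d f j + d j) ∩ Set.Ioo (Δ k) (Δ (k + 1))).Nonempty}

/-- The interval belonging to `j` contains the breakpoint `Δ (k + 1)` in its interior. -/
def Crosses (d : ι → ℝ) (f : ι → α) (Δ : ℕ → ℝ) (k : ℕ) (j : ι) : Prop :=
  startPoint d f j < Δ (k + 1) ∧ Δ (k + 1) < startPoint d f j + d j

/-- The interval belonging to `j` is contained in the region `[Δ k, Δ (k + 1)]`. -/
def InRegion (d : ι → ℝ) (f : ι → α) (Δ : ℕ → ℝ) (k : ℕ) (j : ι) : Prop :=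
  Δ k ≤ startPoint d f j ∧ startPoint d f j + d j ≤ Δ (k + 1)

/-- The two orders place every interval at the same point, except that an interval may move inside
a single region. It mediates between equality of increments and equality of index sets. -/
def SameUpToRegions (d : ι → ℝ) (f : ι → α) (g : ι → β) (m : ℕ) (Δ : ℕ → ℝ) : Prop :=
  ∀ j, startPoint d f j = startPoint d g j ∨ ∃ k ≤ m, InRegion d f Δ k j ∧ InRegion d g Δ k j

lemma Icc_inter_Ioo_nonempty_iff {a b u v : ℝ} (hab : a < b) (huv : u < v) :
    (Set.Icc a b ∩ Set.Ioo u v).Nonempty ↔ a < v ∧ u < b := by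
  constructor
  · rintro ⟨x, ⟨hax, hxb⟩, hux, hxv⟩
    exact ⟨hax.trans_lt hxv, hux.trans_le hxb⟩
  · rintro ⟨hav, hub⟩
    obtain ⟨x, hx, hx'⟩ := exists_between (max_lt (lt_min hab hav) (lt_min hub huv))
    exact ⟨x, ⟨(max_lt_iff.1 hx).1.le, (lt_min_iff.1 hx').1.le⟩,
      (max_lt_iff.1 hx).2, (lt_min_iff.1 hx').2⟩

lemma crosses_or_inRegion (hd : ∀ i, 0 ≤ d i) (hΔ : IsSubdivision (∑ i, d i) m Δ) (f : ι → α)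
    (j : ι) : (∃ k < m, Crosses d f Δ k j) ∨ ∃ k ≤ m, InRegion d f Δ k j :=
  exists_breakpoint_mem_Ioo_or_exists_region (hΔ.zero.trans_le (startPoint_nonneg hd f j))
    ((startPoint_add_le_sum hd f j).trans_eq hΔ.last.symm)

lemma mem_regionIndices (hd : ∀ i, 0 < d i) (hΔ : IsSubdivision (∑ i, d i) m Δ) {k : ℕ}
    (hk : k ≤ m) {j : ι} :
    j ∈ regionIndices d f Δ k ↔ startPoint d f j < Δ (k + 1) ∧ Δ k < startPoint d f j + d j :=
  Icc_inter_Ioo_nonempty_iff (lt_add_of_pos_right _ (hd j)) (hΔ.lt_succ hk)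

lemma mem_regionIndices_iff_eq (hd : ∀ i, 0 < d i) (hΔ : IsSubdivision (∑ i, d i) m Δ) {k l : ℕ}
    (hk : k ≤ m) (hl : l ≤ m) {j : ι} (hj : InRegion d f Δ k j) :
    j ∈ regionIndices d f Δ l ↔ l = k := by
  have hdj := hd j
  rw [mem_regionIndices hd hΔ hl]
  constructor
  · rintro ⟨hstart, hend⟩
    have hkl : k < l + 1 := (hΔ.lt_iff_lt (by lia) (by lia)).1 (hj.1.trans_lt hstart)
    have hlk : l < k + 1 := (hΔ.lt_iff_lt (by lia) (by lia)).1 (hend.trans_le hj.2)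
    lia
  · rintro rfl
    exact ⟨by linarith [hj.2], by linarith [hj.1]⟩

lemma crosses_iff_mem_regionIndices (hd : ∀ i, 0 < d i) (hΔ : IsSubdivision (∑ i, d i) m Δ)
    {k : ℕ} (hk : k < m) {j : ι} :
    Crosses d f Δ k j ↔ j ∈ regionIndices d f Δ k ∧ j ∈ regionIndices d f Δ (k + 1) := by
  have hlt := hΔ.lt_succ hk.le
  have hlt' := hΔ.lt_succ (k := k + 1) hk
  rw [mem_regionIndices hd hΔ hk.le, mem_regionIndices hd hΔ hk]
  exact ⟨fun h => ⟨⟨h.1, hlt.trans h.2⟩, h.1.trans hlt', h.2⟩, fun h => ⟨h.1.1, h.2.2⟩⟩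

lemma exists_mem_regionIndices (hd : ∀ i, 0 < d i) (hΔ : IsSubdivision (∑ i, d i) m Δ)
    (f : ι → α) (j : ι) : ∃ k ≤ m, j ∈ regionIndices d f Δ k := by
  rcases crosses_or_inRegion (fun i => (hd i).le) hΔ f j with ⟨k, hk, hj⟩ | ⟨k, hk, hj⟩
  · exact ⟨k, hk.le, ((crosses_iff_mem_regionIndices hd hΔ hk).1 hj).1⟩
  · exact ⟨k, hk, (mem_regionIndices_iff_eq hd hΔ hk hk hj).2 rfl⟩

lemma sameUpToRegions_of_crosses_imp (hd : ∀ i, 0 ≤ d i) (hΔ : IsSubdivision (∑ i, d i) m Δ)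
    (hf : ∀ j, ∀ k < m, Crosses d f Δ k j → startPoint d f j = startPoint d g j)
    (hg : ∀ j, ∀ k < m, Crosses d g Δ k j → startPoint d g j = startPoint d f j)
    (hfg : ∀ j, ∀ k ≤ m, ∀ l ≤ m, InRegion d f Δ k j → InRegion d g Δ l j → k = l) :
    SameUpToRegions d f g m Δ := by
  intro j
  rcases crosses_or_inRegion hd hΔ f j with ⟨k, hk, hj⟩ | ⟨k, hk, hj⟩
  · exact .inl (hf j k hk hj)
  rcases crosses_or_inRegion hd hΔ g j with ⟨l, hl, hj'⟩ | ⟨l, hl, hj'⟩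
  · exact .inl (hg j l hl hj').symm
  obtain rfl := hfg j k hk l hl hj hj'
  exact .inr ⟨k, hk, hj, hj'⟩

end Regions

section IndexSets

variable {ι α β : Type*} [Fintype ι] [LinearOrder α] [LinearOrder β] {d : ι → ℝ} {f : ι → α}
  {g : ι → β} {m : ℕ} {Δ : ℕ → ℝ}

lemma label_le_of_regionIndices_eq (hd : ∀ i, 0 < d i) (hΔ : IsSubdivision (∑ i, d i) m Δ)
    (hI : ∀ k ≤ m, regionIndices d f Δ k = regionIndices d g Δ k) {k : ℕ} (hk : k ≤ m) {i j : ι}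
    (hstart : startPoint d f j < Δ (k + 1)) (hend : Δ (k + 1) < startPoint d g j + d j)
    (hij : f i < f j) : g i ≤ g j := by
  by_contra! hji
  have hf := startPoint_add_le_startPoint (fun i => (hd i).le) hij
  have hg := startPoint_add_le_startPoint (fun i => (hd i).le) hji
  obtain ⟨l, hl, hil⟩ := exists_mem_regionIndices hd hΔ f i
  have hil' : i ∈ regionIndices d g Δ l := hI l hl ▸ hil
  rw [mem_regionIndices hd hΔ hl] at hil hil'
  have hlk : l < k + 1 :=
    (hΔ.lt_iff_lt (by lia) (by lia)).1 (hil.2.trans_le (hf.trans hstart.le))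
  have hmono : Δ (l + 1) ≤ Δ (k + 1) := hΔ.strictMonoOn.monotoneOn (Set.mem_Iic.2 (by lia))
    (Set.mem_Iic.2 (by lia)) hlk
  linarith [hil'.1]

lemma startPoint_eq_of_crosses_of_regionIndices_eq (hd : ∀ i, 0 < d i)
    (hΔ : IsSubdivision (∑ i, d i) m Δ) (hf : f.Injective) (hg : g.Injective)
    (hI : ∀ k ≤ m, regionIndices d f Δ k = regionIndices d g Δ k) {k : ℕ} (hk : k < m) {j : ι}
    (hj : Crosses d f Δ k j) : startPoint d f j = startPoint d g j := by
  have hj' : Crosses d g Δ k j := by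
    rwa [crosses_iff_mem_regionIndices hd hΔ hk, ← hI k hk.le, ← hI (k + 1) hk,
      ← crosses_iff_mem_regionIndices hd hΔ hk]
  exact startPoint_eq_startPoint_of_not_inverted d hf hg
    (fun _ => label_le_of_regionIndices_eq hd hΔ hI hk.le hj.1 hj'.2)
    (fun _ => label_le_of_regionIndices_eq hd hΔ (fun l hl => (hI l hl).symm) hk.le hj'.1 hj.2)

theorem sameUpToRegions_iff_regionIndices_eq (hd : ∀ i, 0 < d i)
    (hΔ : IsSubdivision (∑ i, d i) m Δ) (hf : f.Injective) (hg : g.Injective) :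
    SameUpToRegions d f g m Δ ↔ ∀ k ≤ m, regionIndices d f Δ k = regionIndices d g Δ k := by
  constructor
  · intro h l hl
    ext j
    rcases h j with hstart | ⟨k, hk, hj, hj'⟩
    · rw [mem_regionIndices hd hΔ hl, mem_regionIndices hd hΔ hl, hstart]
    · rw [mem_regionIndices_iff_eq hd hΔ hk hl hj, mem_regionIndices_iff_eq hd hΔ hk hl hj']
  · intro hI
    refine sameUpToRegions_of_crosses_imp (fun i => (hd i).le) hΔ
      (fun j k hk hj => startPoint_eq_of_crosses_of_regionIndices_eq hd hΔ hf hg hI hk hj)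
      (fun j k hk hj => startPoint_eq_of_crosses_of_regionIndices_eq hd hΔ hg hf
        (fun l hl => (hI l hl).symm) hk hj)
      fun j k hk l hl hj hj' => ?_
    have hjk : j ∈ regionIndices d f Δ k := (mem_regionIndices_iff_eq hd hΔ hk hk hj).2 rfl
    exact (mem_regionIndices_iff_eq hd hΔ hl hk hj').1 (hI k hk ▸ hjk)

end IndexSets

section Increments

variable {ι α β : Type*} [Fintype ι] [LinearOrder α] [LinearOrder β] {d : ι → ℝ} {f : ι → α}
  {g : ι → β} {T : ℝ → ℝ} {m : ℕ} {Δ s : ℕ → ℝ}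

/-- The paper's extreme point: coordinate `j` is the increment of the curve `T` over the interval
belonging to `j`. -/
noncomputable def increments (T : ℝ → ℝ) (d : ι → ℝ) (f : ι → α) (j : ι) : ℝ :=
  T (startPoint d f j + d j) - T (startPoint d f j)

lemma startPoint_mem_Icc (hd : ∀ i, 0 ≤ d i) (f : ι → α) (j : ι) :
    startPoint d f j ∈ Set.Icc 0 (∑ i, d i) :=
  ⟨startPoint_nonneg hd f j, (le_add_of_nonneg_right (hd j)).trans (startPoint_add_le_sum hd f j)⟩

lemma startPoint_add_mem_Icc (hd : ∀ i, 0 ≤ d i) (f : ι → α) (j : ι) :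
    startPoint d f j + d j ∈ Set.Icc 0 (∑ i, d i) :=
  ⟨add_nonneg (startPoint_nonneg hd f j) (hd j), startPoint_add_le_sum hd f j⟩

lemma slope_startPoint (T : ℝ → ℝ) (d : ι → ℝ) (f : ι → α) (j : ι) :
    slope T (startPoint d f j) (startPoint d f j + d j) = increments T d f j / d j := by
  rw [slope_def_field, add_sub_cancel_left, increments]

lemma increments_div_le_increments_div (hd : ∀ i, 0 < d i)
    (hT : ConcaveOn ℝ (Set.Icc 0 (∑ i, d i)) T) {i j : ι} (hij : f i < f j) :
    increments T d f j / d j ≤ increments T d f i / d i := by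
  have hd' := fun i => (hd i).le
  rw [← slope_startPoint, ← slope_startPoint]
  exact slope_le_slope_of_concaveOn hT (startPoint_mem_Icc hd' f i) (startPoint_add_mem_Icc hd' f j)
    (lt_add_of_pos_right _ (hd i)) (startPoint_add_le_startPoint hd' hij)
    (lt_add_of_pos_right _ (hd j))

lemma increments_div_lt_of_crosses_right (hd : ∀ i, 0 < d i)
    (hT : ConcaveOn ℝ (Set.Icc 0 (∑ i, d i)) T) (hΔ : IsAffineSubdivision T (∑ i, d i) m Δ s)
    {k : ℕ} (hk : k < m) {i j : ι} (hj : Crosses d f Δ k j) (hij : f i < f j) :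
    increments T d f j / d j < increments T d f i / d i := by
  have hd' := fun i => (hd i).le
  rw [← slope_startPoint, ← slope_startPoint]
  exact slope_lt_slope_of_isKink_right hT (hΔ.isKink hT hk) (startPoint_mem_Icc hd' f i)
    (startPoint_add_mem_Icc hd' f j) (lt_add_of_pos_right _ (hd i))
    (startPoint_add_le_startPoint hd' hij) hj.1 hj.2

lemma increments_div_lt_of_crosses_left (hd : ∀ i, 0 < d i)
    (hT : ConcaveOn ℝ (Set.Icc 0 (∑ i, d i)) T) (hΔ : IsAffineSubdivision T (∑ i, d i) m Δ s)
    {k : ℕ} (hk : k < m) {i j : ι} (hi : Crosses d f Δ k i) (hij : f i < f j) :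
    increments T d f j / d j < increments T d f i / d i := by
  have hd' := fun i => (hd i).le
  rw [← slope_startPoint, ← slope_startPoint]
  exact slope_lt_slope_of_isKink_left hT (hΔ.isKink hT hk) (startPoint_mem_Icc hd' f i)
    (startPoint_add_mem_Icc hd' f j) hi.1 hi.2 (startPoint_add_le_startPoint hd' hij)
    (lt_add_of_pos_right _ (hd j))

lemma startPoint_eq_of_crosses_of_increments_eq (hd : ∀ i, 0 < d i)
    (hT : ConcaveOn ℝ (Set.Icc 0 (∑ i, d i)) T) (hΔ : IsAffineSubdivision T (∑ i, d i) m Δ s)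
    (hf : f.Injective) (hg : g.Injective) (hE : increments T d f = increments T d g) {k : ℕ}
    (hk : k < m) {j : ι} (hj : Crosses d f Δ k j) : startPoint d f j = startPoint d g j := by
  refine startPoint_eq_startPoint_of_not_inverted d hf hg (fun i hij => ?_) (fun i hij => ?_) <;>
    by_contra! hji
  · have hlt := increments_div_lt_of_crosses_right hd hT hΔ hk hj hij
    exact hlt.not_ge (hE ▸ increments_div_le_increments_div hd hT hji)
  · have hlt := increments_div_lt_of_crosses_left hd hT hΔ hk hj hji
    exact hlt.not_ge (hE ▸ increments_div_le_increments_div hd hT hij)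

lemma increments_eq_slope_mul (hd : ∀ i, 0 ≤ d i) {L : ℝ} (hΔ : IsAffineSubdivision T L m Δ s)
    {k : ℕ} (hk : k ≤ m) {j : ι} (hj : InRegion d f Δ k j) : increments T d f j = s k * d j := by
  have hle := le_add_of_nonneg_right (a := startPoint d f j) (hd j)
  rw [increments, hΔ.sub_eq k hk _ ⟨hj.1, hle.trans hj.2⟩ _ ⟨hj.1.trans hle, hj.2⟩,
    add_sub_cancel_left]

theorem sameUpToRegions_iff_increments_eq (hd : ∀ i, 0 < d i)
    (hT : ConcaveOn ℝ (Set.Icc 0 (∑ i, d i)) T) (hΔ : IsAffineSubdivision T (∑ i, d i) m Δ s)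
    (hf : f.Injective) (hg : g.Injective) :
    SameUpToRegions d f g m Δ ↔ increments T d f = increments T d g := by
  have hd' := fun i => (hd i).le
  constructor
  · intro h
    funext j
    rcases h j with hstart | ⟨k, hk, hj, hj'⟩
    · rw [increments, increments, hstart]
    · rw [increments_eq_slope_mul hd' hΔ hk hj, increments_eq_slope_mul hd' hΔ hk hj']
  · intro hE
    refine sameUpToRegions_of_crosses_imp hd' hΔ.toIsSubdivision
      (fun j k hk hj => startPoint_eq_of_crosses_of_increments_eq hd hT hΔ hf hg hE hk hj)
      (fun j k hk hj => startPoint_eq_of_crosses_of_increments_eq hd hT hΔ hg hf hE.symm hk hj)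
      fun j k hk l hl hj hj' => ?_
    have hmul : s k * d j = s l * d j := by
      rw [← increments_eq_slope_mul hd' hΔ hk hj, hE, increments_eq_slope_mul hd' hΔ hl hj']
    exact (hΔ.strictAntiOn_slope hT).injOn hk hl (mul_right_cancel₀ (hd j).ne' hmul)

theorem stmt12_general (hd : ∀ i, 0 < d i) (hT : ConcaveOn ℝ (Set.Icc 0 (∑ i, d i)) T)
    (hΔ : IsAffineSubdivision T (∑ i, d i) m Δ s) (hf : f.Injective) (hg : g.Injective) :
    increments T d f = increments T d g ↔
      ∀ k ≤ m, regionIndices d f Δ k = regionIndices d g Δ k :=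
  (sameUpToRegions_iff_increments_eq hd hT hΔ hf hg).symm.trans
    (sameUpToRegions_iff_regionIndices_eq hd hΔ.toIsSubdivision hf hg)

end Increments

section Thermomajorization

variable {n : ℕ}

lemma concaveOn_th {d : Fin n → ℝ} (y : Fin n → ℝ) (hd : ∃ i, 0 < d i) :
    ConcaveOn ℝ Set.univ (th d y) := by
  refine concaveOn_sInf_image (I := {i | 0 < d i}) hd (fun i _ => ?_)
    fun x _ => (Set.toFinite _).bddBelow
  refine ⟨convex_univ, fun x _ z _ a b _ _ hab => le_of_eq ?_⟩
  simp only [smul_eq_mul]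
  linear_combination (∑ j, max (y j - y i / d i * d j) 0) * hab

lemma psum_symm (d : Fin n → ℝ) (σ : Equiv.Perm (Fin n)) (j : Fin n) :
    psum d σ (σ.symm j) = startPoint d σ.symm j :=
  Finset.sum_equiv σ (by simp) fun _ _ => rfl

lemma psum_symm_add_one (d : Fin n → ℝ) (σ : Equiv.Perm (Fin n)) (j : Fin n) :
    psum d σ ((σ.symm j : ℕ) + 1) = startPoint d σ.symm j + d j := by
  rw [startPoint_add_eq_sum_insert]
  refine Finset.sum_equiv σ (fun i => ?_) fun _ _ => rfl
  simp [le_iff_eq_or_lt, Fin.val_inj, Equiv.eq_symm_apply]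

lemma Emap_eq_increments (d y : Fin n → ℝ) (σ : Equiv.Perm (Fin n)) :
    Emap d y σ = increments (th d y) d σ.symm := by
  funext j
  rw [Emap, psum_symm, psum_symm_add_one, increments]

lemma forall_one_le_le_add_one_iff {P : ℕ → Prop} {m : ℕ} :
    (∀ k, 1 ≤ k → k ≤ m + 1 → P k) ↔ ∀ k ≤ m, P (k + 1) := by
  refine ⟨fun h k hk => h (k + 1) (by lia) (by lia), fun h k hk hkm => ?_⟩
  obtain ⟨k, rfl⟩ := Nat.exists_eq_add_of_le' hk
  exact h k (by lia)

end Thermomajorization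

/-- Two permutations yield the same extreme point iff the index sets I_k^σ and
I_k^τ coincide for every affine-linear region of the thermomajorization curve. -/
theorem stmt12 (n : ℕ) (hn : 1 ≤ n) (d y : Fin n → ℝ) (hd : ∀ i, 0 < d i)
    (m : ℕ) (hm : m ≤ n - 1) (Δ : ℕ → ℝ) (s b : ℕ → ℝ)
    (hΔ0 : Δ 0 = 0) (hΔlast : Δ (m + 1) = ∑ i, d i)
    (hΔmono : ∀ k ≤ m, Δ k < Δ (k + 1))
    (haff : ∀ k, 1 ≤ k → k ≤ m + 1 → ∀ c ∈ Set.Icc (Δ (k - 1)) (Δ k),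
      th d y c = s k * c + b k)
    (hslope : ∀ k, 1 ≤ k → k ≤ m → s k ≠ s (k + 1))
    (σ τ : Equiv.Perm (Fin n)) :
    Emap d y σ = Emap d y τ ↔
      ∀ k, 1 ≤ k → k ≤ m + 1 →
        {j : Fin n |
          (Set.Icc (psum d σ (σ.symm j).val) (psum d σ ((σ.symm j).val + 1)) ∩
            Set.Ioo (Δ (k - 1)) (Δ k)).Nonempty} =
        {j : Fin n |
          (Set.Icc (psum d τ (τ.symm j).val) (psum d τ ((τ.symm j).val + 1)) ∩
            Set.Ioo (Δ (k - 1)) (Δ k)).Nonempty} := by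
  have hT : ConcaveOn ℝ (Set.Icc 0 (∑ i, d i)) (th d y) :=
    (concaveOn_th y ⟨⟨0, hn⟩, hd _⟩).subset (Set.subset_univ _) (convex_Icc _ _)
  rw [Emap_eq_increments, Emap_eq_increments, stmt12_general hd hT
    (isAffineSubdivision_of_eq_affine hΔ0 hΔlast hΔmono haff hslope) σ.symm.injective
    τ.symm.injective, forall_one_le_le_add_one_iff]
  simp only [psum_symm, psum_symm_add_one, Nat.add_sub_cancel, regionIndices]
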